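/- Let C be a category with pullbacks and let X be an object of C such that, for every Beck module φ: M → Y in C, the map Hom_C(X, M) → Hom_C(X, Y) given by composition with φ is bijective. Then X is formally unramified: for every Beck torsor γ: Z → Y in C, the map Hom_C(X, Z) → Hom_C(X, Y) given by composition with γ is injective. -/

import Mathlib

open CategoryTheory CategoryTheory.Limits

universe v u

/-- A Beck module over `Y`: an abelian group object in the overcategory `C/Y`,
presented by its underlying morphism `φ : M ⟶ Y`, a unit (zero) section `unit`,
an addition `add` over `Y`, and a negation `neg` over `Y`, satisfying the abelian
group axioms on generalized elements (equivalently, via Yoneda, making it an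
abelian group object of `C/Y`). -/
structure BeckModule {C : Type u} [Category.{v} C] [HasPullbacks C] (Y : C) where
  M : C
  φ : M ⟶ Y
  unit : Y ⟶ M
  unit_φ : unit ≫ φ = 𝟙 Y
  add : pullback φ φ ⟶ M
  add_φ : add ≫ φ = pullback.fst φ φ ≫ φ
  neg : M ⟶ M
  neg_φ : neg ≫ φ = φ
  add_assoc : ∀ {T : C} (a b c : T ⟶ M) (hab : a ≫ φ = b ≫ φ) (hbc : b ≫ φ = c ≫ φ),
    pullback.lift (pullback.lift a b hab ≫ add) c
        (by rw [Category.assoc, add_φ, ← Category.assoc, pullback.lift_fst, hab, hbc]) ≫ add =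
      pullback.lift a (pullback.lift b c hbc ≫ add)
        (by rw [Category.assoc, add_φ, ← Category.assoc, pullback.lift_fst, hab]) ≫ add
  add_comm : ∀ {T : C} (a b : T ⟶ M) (h : a ≫ φ = b ≫ φ),
    pullback.lift a b h ≫ add = pullback.lift b a h.symm ≫ add
  zero_add : ∀ {T : C} (a : T ⟶ M),
    pullback.lift (a ≫ φ ≫ unit) a
        (by rw [Category.assoc, Category.assoc, unit_φ, Category.comp_id]) ≫ add = a
  add_neg : ∀ {T : C} (a : T ⟶ M),
    pullback.lift a (a ≫ neg) (by rw [Category.assoc, neg_φ]) ≫ add = a ≫ φ ≫ unit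

/-- A Beck torsor structure on `γ : Z ⟶ Y`: `γ` is an effective epimorphism, equipped
with a Beck module `mod` over `Y` and a group action `τ : M ×_Y Z ⟶ Z` in `C/Y`
(satisfying the unit and associativity axioms for an action of the group object `M`),
such that the shear morphism `(τ, π_Z) : M ×_Y Z ⟶ Z ×_Y Z` is an isomorphism in `C/Y`. -/
structure BeckTorsor {C : Type u} [Category.{v} C] [HasPullbacks C] {Z Y : C} (γ : Z ⟶ Y) where
  mod : BeckModule Y
  effEpi : EffectiveEpi γ
  τ : pullback mod.φ γ ⟶ Z
  τ_γ : τ ≫ γ = pullback.snd mod.φ γ ≫ γ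
  act_unit : ∀ {T : C} (z : T ⟶ Z),
    pullback.lift (z ≫ γ ≫ mod.unit) z
        (by rw [Category.assoc, Category.assoc, mod.unit_φ, Category.comp_id]) ≫ τ = z
  act_assoc : ∀ {T : C} (a b : T ⟶ mod.M) (z : T ⟶ Z)
      (hab : a ≫ mod.φ = b ≫ mod.φ) (hbz : b ≫ mod.φ = z ≫ γ),
    pullback.lift (pullback.lift a b hab ≫ mod.add) z
        (by rw [Category.assoc, mod.add_φ, ← Category.assoc, pullback.lift_fst, hab, hbz]) ≫ τ =
      pullback.lift a (pullback.lift b z hbz ≫ τ)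
        (by rw [Category.assoc, τ_γ, ← Category.assoc, pullback.lift_snd, hab, hbz]) ≫ τ
  shear_iso : IsIso (pullback.lift τ (pullback.snd mod.φ γ) τ_γ :
    pullback mod.φ γ ⟶ pullback γ γ)

/-- An object `X` is formally unramified if, for every Beck torsor `γ : Z ⟶ Y` in `C`,
the canonical map `Hom(X, Z) → Hom(X, Y)` given by composition with `γ` is injective. -/
def FormallyUnramified {C : Type u} [Category.{v} C] [HasPullbacks C] (X : C) : Prop :=
  ∀ ⦃Z Y : C⦄ (γ : Z ⟶ Y), BeckTorsor γ →
    Function.Injective (fun ψ : X ⟶ Z => ψ ≫ γ)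

/-!
Two maps `p q : X ⟶ Z` over `Y` into a torsor differ by a generalized element `p - q` of the
module, read off from the inverse of the shear isomorphism. Injectivity of
`Hom(X, M) → Hom(X, Y)` forces `p - q` to be zero, and zero acts trivially.
-/

section

variable {C : Type u} [Category.{v} C] [HasPullbacks C] {T Y Z : C}

namespace BeckModule

theorem comp_unit_φ (N : BeckModule Y) (y : T ⟶ Y) : (y ≫ N.unit) ≫ N.φ = y := by
  rw [Category.assoc, N.unit_φ, Category.comp_id]

theorem eq_comp_unit_of_injective {N : BeckModule Y}
    (hN : Function.Injective (fun ψ : T ⟶ N.M => ψ ≫ N.φ)) {m : T ⟶ N.M} {y : T ⟶ Y}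
    (hm : m ≫ N.φ = y) : m = y ≫ N.unit :=
  hN (hm.trans (N.comp_unit_φ y).symm)

end BeckModule

namespace BeckTorsor

variable {γ : Z ⟶ Y} (t : BeckTorsor γ)

/-- The shear isomorphism `(m, z) ↦ (m + z, z)` from `M ×_Y Z` to `Z ×_Y Z`. -/
noncomputable def shear : pullback t.mod.φ γ ≅ pullback γ γ :=
  haveI := t.shear_iso
  asIso (pullback.lift t.τ (pullback.snd t.mod.φ γ) t.τ_γ)

theorem shear_inv_τ : t.shear.inv ≫ t.τ = pullback.fst γ γ :=
  (Iso.inv_comp_eq _).2 (pullback.lift_fst _ _ _).symm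

theorem shear_inv_snd : t.shear.inv ≫ pullback.snd t.mod.φ γ = pullback.snd γ γ :=
  (Iso.inv_comp_eq _).2 (pullback.lift_snd _ _ _).symm

/-- The subtraction `Z ×_Y Z ⟶ M` of a torsor, sending `(p, q)` to the element of the module
that translates `q` to `p`. -/
noncomputable def sub : pullback γ γ ⟶ t.mod.M :=
  t.shear.inv ≫ pullback.fst t.mod.φ γ

theorem sub_φ : t.sub ≫ t.mod.φ = pullback.snd γ γ ≫ γ := by
  rw [sub, Category.assoc, pullback.condition, ← Category.assoc, shear_inv_snd]

theorem lift_sub_snd_τ : pullback.lift t.sub (pullback.snd γ γ) t.sub_φ ≫ t.τ =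
    pullback.fst γ γ := by
  have lift_eq_shear_inv : pullback.lift t.sub (pullback.snd γ γ) t.sub_φ = t.shear.inv :=
    pullback.hom_ext (pullback.lift_fst _ _ _)
      ((pullback.lift_snd _ _ _).trans t.shear_inv_snd.symm)
  rw [lift_eq_shear_inv, shear_inv_τ]

theorem lift_sub_φ {p q : T ⟶ Z} (h : p ≫ γ = q ≫ γ) :
    (pullback.lift p q h ≫ t.sub) ≫ t.mod.φ = q ≫ γ := by
  rw [Category.assoc, sub_φ, pullback.lift_snd_assoc]

theorem lift_sub_τ {p q : T ⟶ Z} (h : p ≫ γ = q ≫ γ) :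
    pullback.lift (pullback.lift p q h ≫ t.sub) q (t.lift_sub_φ h) ≫ t.τ = p := by
  have lift_eq_comp : pullback.lift (pullback.lift p q h ≫ t.sub) q (t.lift_sub_φ h) =
      pullback.lift p q h ≫ pullback.lift t.sub (pullback.snd γ γ) t.sub_φ := by
    apply pullback.hom_ext <;> simp only [Category.assoc, pullback.lift_fst, pullback.lift_snd]
  rw [lift_eq_comp, Category.assoc, lift_sub_snd_τ, pullback.lift_fst]

theorem eq_of_lift_sub_eq_unit {p q : T ⟶ Z} (h : p ≫ γ = q ≫ γ)
    (hsub : pullback.lift p q h ≫ t.sub = q ≫ γ ≫ t.mod.unit) : p = q := by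
  have translate := t.lift_sub_τ h
  simp only [hsub] at translate
  exact translate.symm.trans (t.act_unit q)

theorem injective_comp_of_injective_comp_φ
    (hM : Function.Injective (fun ψ : T ⟶ t.mod.M => ψ ≫ t.mod.φ)) :
    Function.Injective (fun ψ : T ⟶ Z => ψ ≫ γ) := by
  intro p q (h : p ≫ γ = q ≫ γ)
  apply t.eq_of_lift_sub_eq_unit h
  rw [BeckModule.eq_comp_unit_of_injective hM (t.lift_sub_φ h), Category.assoc]

end BeckTorsor

end

/-- If, for every Beck module `φ : M ⟶ Y` in `C`, composition with `φ` is a bijection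
`Hom(X, M) → Hom(X, Y)`, then `X` is formally unramified: for every Beck torsor
`γ : Z ⟶ Y` in `C`, composition with `γ` is injective on `Hom(X, Z)`. -/
theorem formallyUnramified_of_beckModule_bijective {C : Type u} [Category.{v} C]
    [HasPullbacks C] (X : C)
    (hX : ∀ ⦃Y : C⦄ (N : BeckModule Y),
      Function.Bijective (fun ψ : X ⟶ N.M => ψ ≫ N.φ)) :
    FormallyUnramified X := by
  intro Z Y γ t
  exact t.injective_comp_of_injective_comp_φ (hX t.mod).injective
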